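/- A vector v ∈ V₆ is stable for the action of G₆ = SL₂(L)×SL₂(L)×Lˣ×Lˣ if and only if Δ₆(v) ≠ 0 in L. -/

import Mathlib

/- The discriminant of the binary quartic A X⁴ + B X³Y + C X²Y² + D XY³ + E Y⁴. -/
def disc4 {R : Type*} [CommRing R] (A B C D E : R) : R :=
  B ^ 2 * C ^ 2 * D ^ 2 - 4 * B ^ 2 * C ^ 3 * E - 4 * B ^ 3 * D ^ 3 + 18 * B ^ 3 * C * D * E
       - 27 * B ^ 4 * E ^ 2 - 4 * A * C ^ 3 * D ^ 2 + 16 * A * C ^ 4 * E + 18 * A * B * C * D ^ 3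
       - 80 * A * B * C ^ 2 * D * E - 6 * A * B ^ 2 * D ^ 2 * E + 144 * A * B ^ 2 * C * E ^ 2 - 27 * A ^ 2 * D ^ 4
       + 144 * A ^ 2 * C * D ^ 2 * E - 128 * A ^ 2 * C ^ 2 * E ^ 2 - 192 * A ^ 2 * B * D * E ^ 2 + 256 * A ^ 3 * E ^ 3

/- The polynomials β₁, …, β₆ of the paper, as integer polynomials in the ten
coordinates a, b, d, e, g, h, j, k, o, r of V₆ (indices 0,…,9 in that order). -/
noncomputable def beta1 : MvPolynomial (Fin 10) ℤ :=
  4 * MvPolynomial.X 0 * MvPolynomial.X 2 * MvPolynomial.X 4 - MvPolynomial.X 4 * MvPolynomial.X 6 ^ 2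
noncomputable def beta2 : MvPolynomial (Fin 10) ℤ :=
  4 * MvPolynomial.X 1 * MvPolynomial.X 2 * MvPolynomial.X 4 + 4 * MvPolynomial.X 0 * MvPolynomial.X 3 * MvPolynomial.X 4 + 4 * MvPolynomial.X 0 * MvPolynomial.X 2 * MvPolynomial.X 5 - MvPolynomial.X 5 * MvPolynomial.X 6 ^ 2
    - 2 * MvPolynomial.X 4 * MvPolynomial.X 6 * MvPolynomial.X 7
noncomputable def beta3 : MvPolynomial (Fin 10) ℤ :=
  4 * MvPolynomial.X 1 * MvPolynomial.X 3 * MvPolynomial.X 4 + 4 * MvPolynomial.X 1 * MvPolynomial.X 2 * MvPolynomial.X 5 + 4 * MvPolynomial.X 0 * MvPolynomial.X 3 * MvPolynomial.X 5 - 2 * MvPolynomial.X 5 * MvPolynomial.X 6 * MvPolynomial.X 7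
    - MvPolynomial.X 4 * MvPolynomial.X 7 ^ 2
noncomputable def beta4 : MvPolynomial (Fin 10) ℤ :=
  4 * MvPolynomial.X 1 * MvPolynomial.X 3 * MvPolynomial.X 5 - MvPolynomial.X 5 * MvPolynomial.X 7 ^ 2
noncomputable def beta5 : MvPolynomial (Fin 10) ℤ :=
  -MvPolynomial.X 0 * MvPolynomial.X 9 ^ 2 - MvPolynomial.X 2 * MvPolynomial.X 8 ^ 2 + MvPolynomial.X 8 * MvPolynomial.X 6 * MvPolynomial.X 9
noncomputable def beta6 : MvPolynomial (Fin 10) ℤ :=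
  -MvPolynomial.X 1 * MvPolynomial.X 9 ^ 2 - MvPolynomial.X 3 * MvPolynomial.X 8 ^ 2 + MvPolynomial.X 8 * MvPolynomial.X 7 * MvPolynomial.X 9

/- Δ₆ = (1/16)·disc₄(F₁F₂): the integer polynomial Q with 16·Q = disc₄(F₁F₂)
(passed as the argument `Q`), interpreted in L via ℤ → L and evaluated at the
coordinates of v ∈ V₆. -/
noncomputable def Delta6 {L : Type*} [CommRing L]
    (Q : MvPolynomial (Fin 10) ℤ) (c : Fin 10 → L) : L :=
  MvPolynomial.aeval c Q

/- Zariski-closedness of a subset of affine n-space over L: it is the common zero locus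
of a set of polynomial functions (with respect to the fixed coordinates). -/
def IsZariskiClosed {n : ℕ} {L : Type*} [CommRing L] (s : Set (Fin n → L)) : Prop :=
  ∃ P : Set (MvPolynomial (Fin n) L), s = {x | ∀ p ∈ P, MvPolynomial.eval x p = 0}

/- Variables of the ambient polynomial ring of V₆: X, Y, Z are inl (inl 0), inl (inl 1),
inl (inr ()) and T, U, W are inr (inl 0), inr (inl 1), inr (inr ()). -/
abbrev Vars6 : Type := (Fin 2 ⊕ Unit) ⊕ (Fin 2 ⊕ Unit)

/- The element of V₆ with coordinates c = (a,b,d,e,g,h,j,k,o,r), recorded as the triple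
of its three components
((aX+bY)T² + (dX+eY)U² + (jX+kY)TU, (gX+hY)W², Z(oT+rU)W),
on which the torus part of G₆ acts by separate scalars. -/
noncomputable def toTriple6 {L : Type*} [CommRing L] (c : Fin 10 → L) :
    MvPolynomial Vars6 L × MvPolynomial Vars6 L × MvPolynomial Vars6 L :=
  ((MvPolynomial.C (c 0) * MvPolynomial.X (Sum.inl (Sum.inl 0)) + MvPolynomial.C (c 1) * MvPolynomial.X (Sum.inl (Sum.inl 1))) * MvPolynomial.X (Sum.inr (Sum.inl 0)) ^ 2
    + (MvPolynomial.C (c 2) * MvPolynomial.X (Sum.inl (Sum.inl 0)) + MvPolynomial.C (c 3) * MvPolynomial.X (Sum.inl (Sum.inl 1))) * MvPolynomial.X (Sum.inr (Sum.inl 1)) ^ 2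
    + (MvPolynomial.C (c 6) * MvPolynomial.X (Sum.inl (Sum.inl 0)) + MvPolynomial.C (c 7) * MvPolynomial.X (Sum.inl (Sum.inl 1))) * (MvPolynomial.X (Sum.inr (Sum.inl 0)) * MvPolynomial.X (Sum.inr (Sum.inl 1))),
   (MvPolynomial.C (c 4) * MvPolynomial.X (Sum.inl (Sum.inl 0)) + MvPolynomial.C (c 5) * MvPolynomial.X (Sum.inl (Sum.inl 1))) * MvPolynomial.X (Sum.inr (Sum.inr ())) ^ 2,
   MvPolynomial.X (Sum.inl (Sum.inr ())) * (MvPolynomial.C (c 8) * MvPolynomial.X (Sum.inr (Sum.inl 0)) + MvPolynomial.C (c 9) * MvPolynomial.X (Sum.inr (Sum.inl 1))) * MvPolynomial.X (Sum.inr (Sum.inr ())))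

/- Linear substitution in (X,Y) by M ∈ SL₂(L) fixing Z, and in (T,U) by N ∈ SL₂(L)
fixing W. -/
noncomputable def sub6 {L : Type*} [CommRing L]
    (M N : Matrix.SpecialLinearGroup (Fin 2) L)
    (v : MvPolynomial Vars6 L) : MvPolynomial Vars6 L :=
  MvPolynomial.aeval
    (Sum.elim
      (Sum.elim (fun i => ∑ j : Fin 2, MvPolynomial.C (M.1 i j) * MvPolynomial.X (Sum.inl (Sum.inl j)))
                (fun _ => MvPolynomial.X (Sum.inl (Sum.inr ()))))
      (Sum.elim (fun i => ∑ j : Fin 2, MvPolynomial.C (N.1 i j) * MvPolynomial.X (Sum.inr (Sum.inl j)))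
                (fun _ => MvPolynomial.X (Sum.inr (Sum.inr ()))))) v

/- The action of G₆ = SL₂(L) × SL₂(L) × Lˣ × Lˣ on V₆ (written on the triple of
components): (M, N, s, t) substitutes (X,Y) by M, (T,U) by N, and multiplies the first
component by s⁻¹, the second by s³t², and the third by t⁻¹. -/
noncomputable def act6 {L : Type*} [Field L]
    (g : Matrix.SpecialLinearGroup (Fin 2) L × Matrix.SpecialLinearGroup (Fin 2) L × Lˣ × Lˣ)
    (v : MvPolynomial Vars6 L × MvPolynomial Vars6 L × MvPolynomial Vars6 L) :
    MvPolynomial Vars6 L × MvPolynomial Vars6 L × MvPolynomial Vars6 L :=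
  (((g.2.2.1 : L))⁻¹ • sub6 g.1 g.2.1 v.1,
   ((g.2.2.1 : L) ^ 3 * (g.2.2.2 : L) ^ 2) • sub6 g.1 g.2.1 v.2.1,
   ((g.2.2.2 : L))⁻¹ • sub6 g.1 g.2.1 v.2.2)

/- Stability: the orbit of v (in the coordinate space of V₆ with respect to its monomial
basis) is Zariski-closed and the stabilizer of v in G₆ is finite. -/
def Stable6 {L : Type*} [Field L] (c : Fin 10 → L) : Prop :=
  IsZariskiClosed {c' : Fin 10 → L |
    ∃ g : Matrix.SpecialLinearGroup (Fin 2) L × Matrix.SpecialLinearGroup (Fin 2) L × Lˣ × Lˣ,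
      toTriple6 c' = act6 g (toTriple6 c)} ∧
  {g : Matrix.SpecialLinearGroup (Fin 2) L × Matrix.SpecialLinearGroup (Fin 2) L × Lˣ × Lˣ |
      act6 g (toTriple6 c) = toTriple6 c}.Finite

/-!
Let `F₁F₂` be the quartic of the statement. `F₁` is the product of the linear form `lin`
multiplying `W²` and the discriminant form of the quadratic component, and `F₂` is, up to sign,
the linear form `val`, so its discriminant factors: `Δ₆` is the resultant of the two quadratic forms
in `T, U` times the squares of the resultant of `lin` and `val` and of the values of the
discriminant form at the zeros of `lin` and `val`. By a Gram determinant identity this is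
`I * (E ^ 2 - 4 * I) ^ 2` for the two basic invariants `I`, `E`.

If one of the factors vanishes, then a substitution brings `v` to a vector on which some
one-parameter subgroup has no negative weights; its limit lies in the orbit closure and has an
infinite stabilizer, so `v` is not stable. If none vanishes, then `v` can be brought to a normal
form depending only on `I` and `E`, whose stabilizer consists of sign changes. Hence the orbit of
`v` is a common level set of `I` and `E`, and it is closed.
-/

section Stability

open MulAction

variable {n : ℕ}

lemma IsZariskiClosed.eval_mem_of_forall_ne {R : Type*} [CommRing R] [IsDomain R] [Infinite R]
    {s : Set (Fin n → R)} (hs : IsZariskiClosed s) (γ : Fin n → Polynomial R) (z₀ : R)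
    (h : ∀ z ≠ z₀, (fun i => (γ i).eval z) ∈ s) : (fun i => (γ i).eval z₀) ∈ s := by
  obtain ⟨P, rfl⟩ := hs
  intro p hp
  have eval_comp (z : R) : (MvPolynomial.aeval γ p).eval z =
      MvPolynomial.eval (fun i => (γ i).eval z) p := by
    simpa [MvPolynomial.coe_aeval_eq_eval] using
      MvPolynomial.comp_aeval_apply γ (Polynomial.aeval (R := R) z) p
  have comp_eq_zero : MvPolynomial.aeval γ p = 0 :=
    Polynomial.eq_zero_of_infinite_isRoot _ <| (Set.finite_singleton z₀).infinite_compl.mono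
      fun z hz => (eval_comp z).trans (h z hz p hp)
  rw [← eval_comp, comp_eq_zero, Polynomial.eval_zero]

/-- The limit at `z = 0` of the orbit `z ↦ (z ^ w i * c i)` of a one-parameter group. -/
def weightLimit {R : Type*} [Zero R] (w : Fin n → ℤ) (c : Fin n → R) (i : Fin n) : R :=
  if w i = 0 then c i else 0

variable {L : Type*} [Field L]

lemma IsZariskiClosed.weightLimit_mem [Infinite L] {s : Set (Fin n → L)}
    (hs : IsZariskiClosed s) (w : Fin n → ℤ) (c : Fin n → L) (hw : ∀ i, w i < 0 → c i = 0)
    (h : ∀ z : Lˣ, (fun i => ((z ^ w i : Lˣ) : L) * c i) ∈ s) : weightLimit w c ∈ s := by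
  let γ (i : Fin n) : Polynomial L := Polynomial.C (c i) * Polynomial.X ^ (w i).toNat
  have eval_zero : (fun i => (γ i).eval 0) = weightLimit w c := by
    funext i
    rcases lt_trichotomy (w i) 0 with hi | hi | hi
    · simp [γ, weightLimit, hw i hi]
    · simp [γ, weightLimit, hi]
    · simp [γ, weightLimit, hi.ne', hi]
  rw [← eval_zero]
  refine hs.eval_mem_of_forall_ne γ 0 fun z hz => ?_
  convert h (Units.mk0 z hz) using 2 with i
  rcases lt_or_ge (w i) 0 with hi | hi
  · simp [γ, hw i hi]
  · obtain ⟨k, hk⟩ := Int.eq_ofNat_of_zero_le hi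
    simp [γ, hk, mul_comm (c i)]

variable {G X : Type*} [Group G] [MulAction G X]

/-- Stability of a point of a `G`-set `X` with respect to coordinates `e` on `X`: its orbit is
Zariski closed and its stabilizer is finite. -/
def IsStablePoint (G : Type*) [Group G] [MulAction G X] (e : X → Fin n → L) (x : X) : Prop :=
  IsZariskiClosed (e '' orbit G x) ∧ Finite (stabilizer G x)

lemma finite_stabilizer_of_mem_orbit {x y : X} (hy : y ∈ orbit G x) [Finite (stabilizer G x)] :
    Finite (stabilizer G y) :=
  Finite.of_equiv _ (stabilizerEquivStabilizerOfOrbitRel (orbitRel_apply.mpr hy)).symm.toEquiv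

lemma IsStablePoint.smul {e : X → Fin n → L} {x : X} (hx : IsStablePoint G e x) (g : G) :
    IsStablePoint G e (g • x) := by
  have := hx.2
  exact ⟨by rw [orbit_smul]; exact hx.1, finite_stabilizer_of_mem_orbit (mem_orbit x g)⟩

/-- The easy half of the Hilbert–Mumford criterion: the limit lies in the closed orbit, and its
stabilizer contains the one-parameter group. -/
theorem not_isStablePoint_of_weights [Infinite L] {e : X → Fin n → L} (he : e.Injective)
    {ρ : Lˣ → G} (hρ : ρ.Injective) {w : Fin n → ℤ}
    (hw : ∀ z x i, e (ρ z • x) i = ((z ^ w i : Lˣ) : L) * e x i) {x : X}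
    (hx : ∀ i, w i < 0 → e x i = 0) : ¬ IsStablePoint G e x := by
  rintro ⟨orbit_closed, _⟩
  obtain ⟨y, hy, hy_limit⟩ : weightLimit w (e x) ∈ e '' orbit G x :=
    orbit_closed.weightLimit_mem w (e x) hx fun z =>
      ⟨ρ z • x, mem_orbit x (ρ z), funext (hw z x)⟩
  have fixed (z : Lˣ) : ρ z ∈ stabilizer G y := by
    refine he (funext fun i => ?_)
    rw [hw, hy_limit, weightLimit]
    split_ifs with hi <;> simp [hi]
  have := finite_stabilizer_of_mem_orbit hy
  have : Infinite Lˣ := unitsEquivNeZero.infinite_iff.mpr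
    (Set.finite_singleton (0 : L)).infinite_compl.to_subtype
  exact Set.infinite_of_injective_forall_mem hρ fixed (Set.toFinite _)

end Stability

section BinaryForms

open Matrix

variable {R : Type*} [CommRing R]

/-- The zero `![w 1, -w 0]` of the binary linear form with coefficients `w`. -/
def perp (w : Fin 2 → R) : Fin 2 → R := ![w 1, -w 0]

/-- The point `![p 0 ^ 2, p 0 * p 1, p 1 ^ 2]` of the Veronese conic: the row vector `q` of
coefficients of a binary quadratic form takes the value `q ⬝ᵥ veronese p` at `p`. -/
def veronese (p : Fin 2 → R) : Fin 3 → R := ![p 0 ^ 2, p 0 * p 1, p 1 ^ 2]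

/-- The symmetric square of a linear substitution: it takes the row vector `q` of coefficients of
the quadratic form `q 0 * T ^ 2 + q 1 * T * U + q 2 * U ^ 2` to `q ᵥ* symSq N`. -/
def symSq (N : Matrix (Fin 2) (Fin 2) R) : Matrix (Fin 3) (Fin 3) R :=
  !![N 0 0 ^ 2, 2 * (N 0 0 * N 0 1), N 0 1 ^ 2;
     N 0 0 * N 1 0, N 0 0 * N 1 1 + N 0 1 * N 1 0, N 0 1 * N 1 1;
     N 1 0 ^ 2, 2 * (N 1 0 * N 1 1), N 1 1 ^ 2]

/-- The discriminant, up to sign, as a symmetric bilinear form on binary quadratic forms: its value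
on the diagonal is `4 * q 0 * q 2 - q 1 ^ 2`. -/
def discMatrix (R : Type*) [CommRing R] : Matrix (Fin 3) (Fin 3) R := !![0, 0, 2; 0, -1, 0; 2, 0, 0]

/-- The resultant of the two binary quadratic forms given by the rows of `A`. -/
def pencilRes (A : Matrix (Fin 2) (Fin 3) R) : R :=
  (A 0 ⨯₃ A 1) 1 ^ 2 - (A 0 ⨯₃ A 1) 0 * (A 0 ⨯₃ A 1) 2

lemma perp_ne_zero {w : Fin 2 → R} (hw : w ≠ 0) : perp w ≠ 0 := by
  contrapose! hw
  ext i
  fin_cases i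
  · simpa [perp] using congr_fun hw 1
  · simpa [perp] using congr_fun hw 0

lemma mulVec_perp_vecMul (M : Matrix (Fin 2) (Fin 2) R) (w : Fin 2 → R) :
    M *ᵥ perp (w ᵥ* M) = M.det • perp w := by
  ext i
  fin_cases i <;> simp [perp, mulVec, vecMul, dotProduct, Fin.sum_univ_two, det_fin_two] <;> ring

lemma perp_smul (c : R) (w : Fin 2 → R) : perp (c • w) = c • perp w := by
  ext i
  fin_cases i <;> simp [perp]

lemma veronese_smul (c : R) (p : Fin 2 → R) : veronese (c • p) = c ^ 2 • veronese p := by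
  ext i
  fin_cases i <;> simp [veronese] <;> ring

@[simp]
lemma symSq_one : symSq (1 : Matrix (Fin 2) (Fin 2) R) = 1 := by
  ext i j
  fin_cases i <;> fin_cases j <;> simp [symSq]

lemma symSq_mul (N P : Matrix (Fin 2) (Fin 2) R) : symSq (N * P) = symSq N * symSq P := by
  ext i j
  fin_cases i <;> fin_cases j <;>
    simp [symSq, mul_apply, Fin.sum_univ_two, Fin.sum_univ_three] <;> ring

lemma symSq_col_zero (N : Matrix (Fin 2) (Fin 2) R) : (symSq N).col 0 = veronese (N.col 0) := by
  ext i
  fin_cases i <;> rfl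

lemma symSq_mulVec_veronese (N : Matrix (Fin 2) (Fin 2) R) (p : Fin 2 → R) :
    symSq N *ᵥ veronese p = veronese (N *ᵥ p) := by
  ext i
  fin_cases i <;>
    simp [symSq, veronese, mulVec, dotProduct, Fin.sum_univ_two, Fin.sum_univ_three] <;> ring

lemma symSq_mul_discMatrix_mul_transpose (N : Matrix (Fin 2) (Fin 2) R) :
    symSq N * discMatrix R * (symSq N)ᵀ = N.det ^ 2 • discMatrix R := by
  ext i j
  fin_cases i <;> fin_cases j <;>
    simp [symSq, discMatrix, mul_apply, Fin.sum_univ_three, det_fin_two] <;> ring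

lemma pencilRes_smul (c : R) (A : Matrix (Fin 2) (Fin 3) R) :
    pencilRes (c • A) = c ^ 4 * pencilRes A := by
  simp [pencilRes, crossProduct]
  ring

lemma pencilRes_mul (M : Matrix (Fin 2) (Fin 2) R) (A : Matrix (Fin 2) (Fin 3) R) :
    pencilRes (M * A) = M.det ^ 2 * pencilRes A := by
  simp [pencilRes, crossProduct, mul_apply, Fin.sum_univ_two, det_fin_two]
  ring

lemma pencilRes_mul_symSq (A : Matrix (Fin 2) (Fin 3) R) (N : Matrix (Fin 2) (Fin 2) R) :
    pencilRes (A * symSq N) = N.det ^ 4 * pencilRes A := by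
  simp [pencilRes, crossProduct, symSq, mul_apply, Fin.sum_univ_three, det_fin_two]
  ring

lemma det_mul_discMatrix_mul_transpose (A : Matrix (Fin 2) (Fin 3) R) :
    (A * discMatrix R * Aᵀ).det = -4 * pencilRes A := by
  simp [pencilRes, crossProduct, discMatrix, mul_apply, Fin.sum_univ_three, det_fin_two]
  ring

/-- The value of a bilinear form on the plane at the zeros of two linear forms. -/
def perpForm (D : Matrix (Fin 2) (Fin 2) R) (x y : Fin 2 → R) : R := perp x ⬝ᵥ D *ᵥ perp y

lemma perpForm_smul (c a b : R) (D : Matrix (Fin 2) (Fin 2) R) (x y : Fin 2 → R) :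
    perpForm (c • D) (a • x) (b • y) = c * a * b * perpForm D x y := by
  simp only [perpForm, perp_smul, smul_mulVec, mulVec_smul, smul_dotProduct, dotProduct_smul,
    smul_eq_mul]
  ring

lemma perpForm_transpose_mul_mul (M D : Matrix (Fin 2) (Fin 2) R) (x y : Fin 2 → R) :
    perpForm (Mᵀ * D * M) (x ᵥ* M) (y ᵥ* M) = M.det ^ 2 * perpForm D x y := by
  rw [perpForm, ← mulVec_mulVec, ← mulVec_mulVec, mulVec_perp_vecMul, dotProduct_mulVec,
    vecMul_transpose, mulVec_perp_vecMul]
  simp only [perpForm, mulVec_smul, smul_dotProduct, dotProduct_smul, smul_eq_mul]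
  ring

lemma perp_vecMul_dotProduct_vecMul (M : Matrix (Fin 2) (Fin 2) R) (x y : Fin 2 → R) :
    perp (x ᵥ* M) ⬝ᵥ (y ᵥ* M) = M.det * (perp x ⬝ᵥ y) := by
  rw [dotProduct_comm, ← dotProduct_mulVec, mulVec_perp_vecMul, dotProduct_smul, dotProduct_comm,
    smul_eq_mul]

lemma perp_dotProduct_of_apply_zero_eq_zero {x : Fin 2 → R} (hx : x 0 = 0) (y : Fin 2 → R) :
    perp x ⬝ᵥ y = x 1 * y 0 := by
  simp [perp, dotProduct, hx]

lemma perpForm_self_of_apply_zero_eq_zero (D : Matrix (Fin 2) (Fin 2) R) {x : Fin 2 → R}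
    (hx : x 0 = 0) : perpForm D x x = x 1 ^ 2 * D 0 0 := by
  simp [perpForm, perp, mulVec, dotProduct, hx]
  ring

lemma perpForm_self_of_apply_one_eq_zero (D : Matrix (Fin 2) (Fin 2) R) {x : Fin 2 → R}
    (hx : x 1 = 0) : perpForm D x x = x 0 ^ 2 * D 1 1 := by
  simp [perpForm, perp, mulVec, dotProduct, hx]
  ring

/-- The Gram determinant identity in the plane; `perp x ⬝ᵥ y` is, up to sign, the determinant with
rows `x` and `y`. -/
lemma perpForm_mul_perpForm {D : Matrix (Fin 2) (Fin 2) R} (hD : D.IsSymm) (x y : Fin 2 → R) :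
    perpForm D x x * perpForm D y y = perpForm D x y ^ 2 + D.det * (perp x ⬝ᵥ y) ^ 2 := by
  have : D 1 0 = D 0 1 := hD.apply 0 1
  simp [perpForm, perp, mulVec, dotProduct, Fin.sum_univ_two, det_fin_two, this]
  ring

end BinaryForms

section AlgClosed

open Matrix

variable {L : Type*} [Field L] [IsAlgClosed L]

lemma exists_veronese_eq {x : Fin 3 → L} (hx : x 1 ^ 2 = x 0 * x 2) : ∃ p, veronese p = x := by
  obtain ⟨a, ha⟩ := IsAlgClosed.exists_pow_nat_eq (x 0) two_pos
  obtain ⟨b, hb⟩ := IsAlgClosed.exists_pow_nat_eq (x 2) two_pos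
  have hab : x 1 = a * b ∨ x 1 = -(a * b) := by
    rw [← sq_eq_sq_iff_eq_or_eq_neg, hx, ← ha, ← hb, mul_pow]
  rcases hab with hab | hab
  · exact ⟨![a, b], by ext i; fin_cases i <;> simp [veronese, ha, hb, hab]⟩
  · exact ⟨![a, -b], by ext i; fin_cases i <;> simp [veronese, ha, hb, hab]⟩

lemma exists_dotProduct_veronese_eq_zero (q : Fin 3 → L) :
    ∃ p : Fin 2 → L, p ≠ 0 ∧ q ⬝ᵥ veronese p = 0 := by
  rcases eq_or_ne (q 0) 0 with h0 | h0
  · exact ⟨![1, 0], by simp, by simp [veronese, dotProduct, Fin.sum_univ_three, h0]⟩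
  · obtain ⟨x, hx⟩ := IsAlgClosed.exists_root
      (Polynomial.C (q 0) * Polynomial.X ^ 2 + Polynomial.C (q 1) * Polynomial.X +
        Polynomial.C (q 2)) (by simp [Polynomial.degree_quadratic h0])
    refine ⟨![x, 1], by simp, ?_⟩
    simpa [veronese, dotProduct, Fin.sum_univ_three] using hx

/-- If the two forms are independent, their cross product is the only candidate for the Veronese
image of a common zero, and `pencilRes A = 0` says that it lies on the conic. -/
lemma exists_mulVec_veronese_eq_zero {A : Matrix (Fin 2) (Fin 3) L} (hA : pencilRes A = 0) :
    ∃ p : Fin 2 → L, p ≠ 0 ∧ A *ᵥ veronese p = 0 := by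
  suffices ∃ p : Fin 2 → L, p ≠ 0 ∧ A 0 ⬝ᵥ veronese p = 0 ∧ A 1 ⬝ᵥ veronese p = 0 by
    obtain ⟨p, hp, h0, h1⟩ := this
    exact ⟨p, hp, funext <| Fin.forall_fin_two.mpr ⟨h0, h1⟩⟩
  by_cases hn : A 0 ⨯₃ A 1 = 0
  · rcases eq_or_ne (A 0) 0 with h0 | h0
    · obtain ⟨p, hp, hp1⟩ := exists_dotProduct_veronese_eq_zero (A 1)
      exact ⟨p, hp, by rw [h0, zero_dotProduct], hp1⟩
    · have dependent : ¬ LinearIndependent L ![A 0, A 1] :=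
        fun h => crossProduct_ne_zero_iff_linearIndependent.mpr h hn
      rw [LinearIndependent.pair_iff' h0, not_forall_not] at dependent
      obtain ⟨a, ha⟩ := dependent
      obtain ⟨p, hp, hp0⟩ := exists_dotProduct_veronese_eq_zero (A 0)
      exact ⟨p, hp, hp0, by rw [← ha, smul_dotProduct, hp0, smul_zero]⟩
  · obtain ⟨p, hp⟩ := exists_veronese_eq (sub_eq_zero.mp hA)
    refine ⟨p, ?_, by rw [hp, dot_self_cross], by rw [hp, dot_cross_self]⟩
    rintro rfl
    exact hn (by rw [← hp]; ext i; fin_cases i <;> simp [veronese])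

end AlgClosed

section SpecialLinear

open Matrix
open scoped MatrixGroups

variable {K : Type*} [Field K]

lemma exists_SL2_col_eq {p : Fin 2 → K} (hp : p ≠ 0) (j : Fin 2) :
    ∃ M : SL(2, K), M.1.col j = p := by
  have coprime : IsCoprime (p 0) (p 1) := by
    rcases Fin.exists_fin_two.mp (Function.ne_iff.mp hp) with h0 | h1
    · exact ⟨(p 0)⁻¹, 0, by rw [inv_mul_cancel₀ h0, zero_mul, add_zero]⟩
    · exact ⟨0, (p 1)⁻¹, by rw [inv_mul_cancel₀ h1, zero_mul, zero_add]⟩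
  obtain ⟨M, h0, h1⟩ := coprime.exists_SL2_col j
  exact ⟨M, funext <| Fin.forall_fin_two.mpr ⟨h0, h1⟩⟩

lemma exists_vecMul_apply_eq_zero (w : Fin 2 → K) (j : Fin 2) :
    ∃ M : SL(2, K), (w ᵥ* M.1) j = 0 := by
  rcases eq_or_ne w 0 with rfl | hw
  · exact ⟨1, by simp⟩
  · obtain ⟨M, hM⟩ := exists_SL2_col_eq (perp_ne_zero hw) j
    refine ⟨M, ?_⟩
    change w ⬝ᵥ M.1.col j = 0
    rw [hM]
    simp [perp, dotProduct, mul_comm]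

lemma exists_vecMul_eq_zero_of_perp_dotProduct_ne_zero {w w' : Fin 2 → K}
    (h : perp w ⬝ᵥ w' ≠ 0) :
    ∃ M : SL(2, K), (w ᵥ* M.1) 0 = 0 ∧ (w' ᵥ* M.1) 1 = 0 := by
  simp only [perp, dotProduct, Fin.sum_univ_two, cons_val_zero, cons_val_one] at h
  set c := w 1 * w' 0 + -w 0 * w' 1 with hc
  refine ⟨⟨!![w 1, -w' 1 / c; -w 0, w' 0 / c], ?_⟩, ?_, ?_⟩
  · rw [det_fin_two_of]
    field_simp
    rw [hc]
    ring
  · simp [vecMul, dotProduct]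
    ring
  · simp [vecMul, dotProduct]
    ring

lemma SL2_eq_diag2 {M : SL(2, K)} {u : Kˣ} (h01 : M.1 0 1 = 0) (h10 : M.1 1 0 = 0)
    (h11 : M.1 1 1 = u) :
    M = SpecialLinearGroup.diag2 ((u⁻¹ : Kˣ) : K) (u⁻¹).ne_zero := by
  have hdet := M.2
  rw [det_fin_two, h01, h11, zero_mul, sub_zero] at hdet
  have h00 : M.1 0 0 = (u : K)⁻¹ := eq_inv_of_mul_eq_one_left hdet
  apply Subtype.ext
  rw [SpecialLinearGroup.diag2_coe', eta_fin_two M.1, h00, h01, h10, h11]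
  simp

end SpecialLinear

open Matrix
open scoped MatrixGroups RightActions

/-- The group acting on `V6`, in the shape in which it occurs in `act6`. -/
abbrev G6 (R : Type*) [CommRing R] : Type _ := SL(2, R) × SL(2, R) × Rˣ × Rˣ

/-- An element of the representation, split into its three components: row `i` of `quad` holds the
coefficients of `T ^ 2`, `T * U`, `U ^ 2` in front of the `i`-th of the variables `X`, `Y`, while
`lin` and `mix` hold the coefficients of the linear forms multiplying `W ^ 2` and `Z * W`. -/
@[ext]
structure V6 (R : Type*) where
  quad : Matrix (Fin 2) (Fin 3) R
  lin : Fin 2 → R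
  mix : Fin 2 → R

namespace V6

section Action

variable {K : Type*} [Field K]

/-- Substitution acts on the right. -/
instance : MulAction (G6 K)ᵐᵒᵖ (V6 K) where
  smul g v :=
    { quad := (g.unop.2.2.1 : K)⁻¹ • (g.unop.1.1ᵀ * v.quad * symSq g.unop.2.1.1)
      lin := ((g.unop.2.2.1 : K) ^ 3 * (g.unop.2.2.2 : K) ^ 2) • (v.lin ᵥ* g.unop.1.1)
      mix := (g.unop.2.2.2 : K)⁻¹ • (v.mix ᵥ* g.unop.2.1.1) }
  one_smul v := by
    ext1
    · change ((1 : Kˣ) : K)⁻¹ • ((1 : Matrix _ _ K)ᵀ * v.quad * symSq 1) = v.quad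
      simp
    · change (((1 : Kˣ) : K) ^ 3 * ((1 : Kˣ) : K) ^ 2) • (v.lin ᵥ* (1 : Matrix _ _ K)) = v.lin
      simp
    · change ((1 : Kˣ) : K)⁻¹ • (v.mix ᵥ* (1 : Matrix _ _ K)) = v.mix
      simp
  mul_smul g h v := by
    obtain ⟨M, N, s, t⟩ := g
    obtain ⟨M', N', s', t'⟩ := h
    ext1
    · change ((s' * s : Kˣ) : K)⁻¹ • ((M'.1 * M.1)ᵀ * v.quad * symSq (N'.1 * N.1)) =
        (s : K)⁻¹ • (M.1ᵀ * ((s' : K)⁻¹ • (M'.1ᵀ * v.quad * symSq N'.1)) * symSq N.1)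
      simp [symSq_mul, smul_smul, Matrix.mul_assoc]
    · change (((s' * s : Kˣ) : K) ^ 3 * ((t' * t : Kˣ) : K) ^ 2) • (v.lin ᵥ* (M'.1 * M.1)) =
        ((s : K) ^ 3 * (t : K) ^ 2) • (((s' : K) ^ 3 * (t' : K) ^ 2) • (v.lin ᵥ* M'.1)) ᵥ* M.1
      rw [smul_vecMul, vecMul_vecMul, smul_smul, Units.val_mul, Units.val_mul]
      congr 1
      ring
    · change ((t' * t : Kˣ) : K)⁻¹ • (v.mix ᵥ* (N'.1 * N.1)) =
        (t : K)⁻¹ • ((t' : K)⁻¹ • (v.mix ᵥ* N'.1)) ᵥ* N.1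
      rw [smul_vecMul, vecMul_vecMul, smul_smul, Units.val_mul, _root_.mul_inv_rev]

variable (v : V6 K) (M N : SL(2, K)) (s t : Kˣ)

lemma quad_smul : (v <• ((M, N, s, t) : G6 K)).quad = (s : K)⁻¹ • (M.1ᵀ * v.quad * symSq N.1) :=
  rfl

lemma lin_smul : (v <• ((M, N, s, t) : G6 K)).lin = ((s : K) ^ 3 * (t : K) ^ 2) • (v.lin ᵥ* M.1) :=
  rfl

lemma mix_smul : (v <• ((M, N, s, t) : G6 K)).mix = (t : K)⁻¹ • (v.mix ᵥ* N.1) := rfl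

end Action

section Coordinates

variable {R : Type*} [CommRing R]

variable (R) in
/-- The coordinates `(a, b, d, e, g, h, j, k, o, r)`. -/
def coords : V6 R ≃ (Fin 10 → R) where
  toFun v := ![v.quad 0 0, v.quad 1 0, v.quad 0 2, v.quad 1 2, v.lin 0, v.lin 1,
    v.quad 0 1, v.quad 1 1, v.mix 0, v.mix 1]
  invFun c := ⟨!![c 0, c 6, c 2; c 1, c 7, c 3], ![c 4, c 5], ![c 8, c 9]⟩
  left_inv v := by
    ext1
    · ext i j
      fin_cases i <;> fin_cases j <;> rfl
    · ext i
      fin_cases i <;> rfl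
    · ext i
      fin_cases i <;> rfl
  right_inv c := by
    ext i
    fin_cases i <;> rfl

lemma toTriple6_injective : (toTriple6 (L := R)).Injective := by
  intro c c' h
  simp only [toTriple6, Prod.mk.injEq] at h
  obtain ⟨hquad, hlin, hmix⟩ := h
  let point (x y t u : R) : Vars6 → R :=
    Sum.elim (Sum.elim ![x, y] fun _ => 1) (Sum.elim ![t, u] fun _ => 1)
  have quad (x y t u : R) := congrArg (MvPolynomial.eval (point x y t u)) hquad
  have lin (x y : R) := congrArg (MvPolynomial.eval (point x y 0 0)) hlin
  have mix (t u : R) := congrArg (MvPolynomial.eval (point 0 0 t u)) hmix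
  simp only [point, map_add, map_mul, map_pow, MvPolynomial.eval_X, MvPolynomial.eval_C,
    Sum.elim_inl, Sum.elim_inr, cons_val] at quad lin mix
  funext i
  fin_cases i <;> simp only [Fin.reduceFinMk, Fin.zero_eta, Fin.mk_one]
  · linear_combination quad 1 0 1 0
  · linear_combination quad 0 1 1 0
  · linear_combination quad 1 0 0 1
  · linear_combination quad 0 1 0 1
  · linear_combination lin 1 0
  · linear_combination lin 0 1
  · linear_combination quad 1 0 1 1 - quad 1 0 1 0 - quad 1 0 0 1
  · linear_combination quad 0 1 1 1 - quad 0 1 1 0 - quad 0 1 0 1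
  · linear_combination mix 1 0
  · linear_combination mix 0 1

lemma act6_toTriple6_coords {L : Type*} [Field L] (g : G6 L) (v : V6 L) :
    act6 g (toTriple6 (coords L v)) = toTriple6 (coords L (v <• g)) := by
  obtain ⟨M, N, s, t⟩ := g
  simp only [act6, toTriple6, Prod.mk.injEq, sub6, map_add, map_mul, map_pow,
    MvPolynomial.aeval_X, Sum.elim_inl, Sum.elim_inr, Fin.sum_univ_two, MvPolynomial.smul_eq_C_mul,
    ← MvPolynomial.algebraMap_eq, AlgHom.commutes]
  simp only [MvPolynomial.algebraMap_eq, coords, Equiv.coe_fn_mk, cons_val, quad_smul, lin_smul,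
    mix_smul, symSq, Matrix.smul_apply, Pi.smul_apply, mul_apply, vecMul, dotProduct,
    transpose_apply, Fin.sum_univ_two, Fin.sum_univ_three, of_apply, smul_eq_mul, map_add, map_mul,
    map_pow, map_ofNat]
  refine ⟨?_, ?_, ?_⟩ <;> ring

end Coordinates

end V6

theorem stable6_coords_iff {L : Type*} [Field L] (v : V6 L) :
    Stable6 (V6.coords L v) ↔ IsStablePoint (G6 L)ᵐᵒᵖ (V6.coords L) v := by
  simp only [Stable6, IsStablePoint, V6.act6_toTriple6_coords, V6.toTriple6_injective.eq_iff]
  have orbit_eq : {c' | ∃ g : G6 L, c' = V6.coords L (v <• g)} =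
      V6.coords L '' MulAction.orbit (G6 L)ᵐᵒᵖ v := by
    ext c'
    constructor
    · rintro ⟨g, rfl⟩
      exact ⟨_, MulAction.mem_orbit v (MulOpposite.op g), rfl⟩
    · rintro ⟨_, ⟨g, rfl⟩, rfl⟩
      exact ⟨g.unop, rfl⟩
  have stabilizer_finite_iff : {g : G6 L | V6.coords L (v <• g) = V6.coords L v}.Finite ↔
      Finite (MulAction.stabilizer (G6 L)ᵐᵒᵖ v) :=
    (MulOpposite.opEquiv.subtypeEquiv fun _ => (V6.coords L).injective.eq_iff).finite_iff
  rw [orbit_eq, stabilizer_finite_iff]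

namespace V6

section Covariants

variable {R : Type*} [CommRing R] (v : V6 R)

/-- The discriminant of the quadratic form in `T, U` as a function of `X, Y`: the symmetric matrix
of this binary quadratic form. -/
def gram : Matrix (Fin 2) (Fin 2) R := v.quad * discMatrix R * v.quadᵀ

/-- The linear form in `X, Y` obtained by evaluating the quadratic component at the zero of the
linear form `mix`. It is `-F₂` in the notation of the statement. -/
def val : Fin 2 → R := v.quad *ᵥ veronese (perp v.mix)

/-- The resultant of the linear forms `lin` and `val`. -/
def linRes : R := perp v.lin ⬝ᵥ v.val

/-- The invariant `pencilRes v.quad * v.linRes ^ 2` of degree 12. -/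
def resInv : R := pencilRes v.quad * v.linRes ^ 2

/-- The invariant of degree 6 polarizing the two discriminants `perpForm v.gram v.lin v.lin` and
`perpForm v.gram v.val v.val`. -/
def polarInv : R := perpForm v.gram v.lin v.val

/-- The integer polynomial that `Delta6` evaluates, expressed through the two basic invariants. -/
def discInv : R := v.resInv * (v.polarInv ^ 2 - 4 * v.resInv) ^ 2

lemma isSymm_gram : v.gram.IsSymm := by
  have : (discMatrix R)ᵀ = discMatrix R := by
    ext i j
    fin_cases i <;> fin_cases j <;> rfl
  rw [IsSymm, gram, transpose_mul, transpose_mul, transpose_transpose, this, Matrix.mul_assoc]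

lemma perpForm_lin_mul_perpForm_val :
    perpForm v.gram v.lin v.lin * perpForm v.gram v.val v.val = v.polarInv ^ 2 - 4 * v.resInv := by
  rw [perpForm_mul_perpForm v.isSymm_gram, gram, det_mul_discMatrix_mul_transpose, polarInv, resInv,
    linRes, gram]
  ring

lemma gram_apply_self (i : Fin 2) :
    v.gram i i = 4 * v.quad i 0 * v.quad i 2 - v.quad i 1 ^ 2 := by
  simp [gram, discMatrix, mul_apply, Fin.sum_univ_three]
  ring

lemma val_of_mix_zero_eq_zero {v : V6 R} (hmix : v.mix 0 = 0) (i : Fin 2) :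
    v.val i = v.quad i 0 * v.mix 1 ^ 2 := by
  simp [val, veronese, perp, mulVec, dotProduct, Fin.sum_univ_three, hmix]

lemma discInv_ne_zero_iff [IsDomain R] {v : V6 R} :
    v.discInv ≠ 0 ↔ pencilRes v.quad ≠ 0 ∧ v.linRes ≠ 0 ∧
      perpForm v.gram v.lin v.lin ≠ 0 ∧ perpForm v.gram v.val v.val ≠ 0 := by
  rw [discInv, ← perpForm_lin_mul_perpForm_val]
  simp only [resInv, ne_eq, mul_eq_zero, not_or, pow_eq_zero_iff two_ne_zero, and_assoc]

end Covariants

section Equivariance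

variable {K : Type*} [Field K] (v : V6 K) (M N : SL(2, K)) (s t : Kˣ)

lemma gram_smul : (v <• ((M, N, s, t) : G6 K)).gram =
    ((s : K)⁻¹ ^ 2) • (M.1ᵀ * v.gram * M.1) := by
  have := symSq_mul_discMatrix_mul_transpose N.1
  rw [N.2, one_pow, one_smul] at this
  calc (v <• ((M, N, s, t) : G6 K)).gram
    _ = ((s : K)⁻¹ ^ 2) • (M.1ᵀ * v.quad * symSq N.1 * discMatrix K *
          (M.1ᵀ * v.quad * symSq N.1)ᵀ) := by
      simp only [gram, quad_smul, transpose_smul, Matrix.smul_mul, Matrix.mul_smul, smul_smul, sq]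
    _ = ((s : K)⁻¹ ^ 2) • (M.1ᵀ * (v.quad * (symSq N.1 * discMatrix K * (symSq N.1)ᵀ) *
          v.quadᵀ) * M.1) := by
      simp only [transpose_mul, transpose_transpose, Matrix.mul_assoc]
    _ = _ := by rw [this, gram]

lemma val_smul : (v <• ((M, N, s, t) : G6 K)).val =
    ((s : K)⁻¹ * (t : K)⁻¹ ^ 2) • (v.val ᵥ* M.1) := by
  simp only [val, quad_smul, mix_smul, perp_smul, veronese_smul, smul_mulVec, mulVec_smul,
    ← mulVec_mulVec, symSq_mulVec_veronese, mulVec_perp_vecMul, N.2, one_smul, mulVec_transpose,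
    smul_smul, mul_comm]

lemma linRes_smul : (v <• ((M, N, s, t) : G6 K)).linRes = (s : K) ^ 2 * v.linRes := by
  rw [linRes, lin_smul, val_smul, perp_smul, smul_dotProduct, dotProduct_smul,
    perp_vecMul_dotProduct_vecMul, M.2, one_mul, smul_smul, smul_eq_mul, linRes]
  field_simp

lemma perpForm_gram_lin_smul : perpForm (v <• ((M, N, s, t) : G6 K)).gram
    (v <• ((M, N, s, t) : G6 K)).lin (v <• ((M, N, s, t) : G6 K)).lin =
      ((s : K) ^ 2 * (t : K) ^ 2) ^ 2 * perpForm v.gram v.lin v.lin := by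
  rw [gram_smul, lin_smul, perpForm_smul, perpForm_transpose_mul_mul, M.2]
  field_simp

lemma perpForm_gram_val_smul : perpForm (v <• ((M, N, s, t) : G6 K)).gram
    (v <• ((M, N, s, t) : G6 K)).val (v <• ((M, N, s, t) : G6 K)).val =
      ((s : K) ^ 2 * (t : K) ^ 2)⁻¹ ^ 2 * perpForm v.gram v.val v.val := by
  rw [gram_smul, val_smul, perpForm_smul, perpForm_transpose_mul_mul, M.2]
  field_simp

lemma pencilRes_quad_smul : pencilRes (v <• ((M, N, s, t) : G6 K)).quad =
    (s : K)⁻¹ ^ 4 * pencilRes v.quad := by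
  rw [quad_smul, pencilRes_smul, pencilRes_mul_symSq, pencilRes_mul, det_transpose, M.2, N.2]
  ring

@[simp]
lemma resInv_smul (g : G6 K) : (v <• g).resInv = v.resInv := by
  obtain ⟨M, N, s, t⟩ := g
  rw [resInv, linRes_smul, pencilRes_quad_smul, resInv]
  field_simp

@[simp]
lemma polarInv_smul (g : G6 K) : (v <• g).polarInv = v.polarInv := by
  obtain ⟨M, N, s, t⟩ := g
  rw [polarInv, gram_smul, lin_smul, val_smul, perpForm_smul, perpForm_transpose_mul_mul, M.2,
    polarInv]
  field_simp

@[simp]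
lemma discInv_smul (g : G6 K) : (v <• g).discInv = v.discInv := by
  simp only [discInv, resInv_smul, polarInv_smul]

end Equivariance

end V6

section Discriminant

/-- The binary quartic is the product of the quadratic form with matrix `D` and the linear forms
with coefficients `l` and `u`. -/
lemma disc4_mul_mul {R : Type*} [CommRing R] {D : Matrix (Fin 2) (Fin 2) R} (hD : D.IsSymm)
    (l u : Fin 2 → R) :
    disc4 (D 0 0 * l 0 * u 0) (D 0 0 * l 0 * u 1 + (D 0 0 * l 1 + 2 * D 0 1 * l 0) * u 0)
      ((D 0 0 * l 1 + 2 * D 0 1 * l 0) * u 1 + (2 * D 0 1 * l 1 + D 1 1 * l 0) * u 0)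
      ((2 * D 0 1 * l 1 + D 1 1 * l 0) * u 1 + D 1 1 * l 1 * u 0) (D 1 1 * l 1 * u 1)
      = -4 * D.det * (perp l ⬝ᵥ u) ^ 2 * (perpForm D l l * perpForm D u u) ^ 2 := by
  have : D 1 0 = D 0 1 := hD.apply 0 1
  simp only [disc4, perpForm, perp, mulVec, dotProduct, Fin.sum_univ_two, det_fin_two, this,
    cons_val]
  ring

namespace V6

variable {R S : Type*} [CommRing R] [CommRing S]

lemma map_resInv_coords_symm (f : R →+* S) (c : Fin 10 → R) :
    f ((coords R).symm c).resInv = ((coords S).symm (f ∘ c)).resInv := by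
  simp [resInv, linRes, perp, val, pencilRes, crossProduct, veronese, coords, mulVec, dotProduct,
    Fin.sum_univ_two, Fin.sum_univ_three]

lemma map_polarInv_coords_symm (f : R →+* S) (c : Fin 10 → R) :
    f ((coords R).symm c).polarInv = ((coords S).symm (f ∘ c)).polarInv := by
  simp [polarInv, perpForm, perp, val, gram, veronese, discMatrix, coords, mulVec, dotProduct,
    mul_apply, Fin.sum_univ_two, Fin.sum_univ_three, map_ofNat]

lemma map_discInv_coords_symm (f : R →+* S) (c : Fin 10 → R) :
    f ((coords R).symm c).discInv = ((coords S).symm (f ∘ c)).discInv := by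
  simp only [discInv, map_mul, map_pow, map_sub, map_ofNat, map_resInv_coords_symm,
    map_polarInv_coords_symm]

lemma eq_discInv_of_sixteen_mul_eq_disc4 {Q : MvPolynomial (Fin 10) ℤ}
    (hQ : 16 * Q =
      disc4 (beta1 * beta5) (beta1 * beta6 + beta2 * beta5) (beta2 * beta6 + beta3 * beta5)
        (beta3 * beta6 + beta4 * beta5) (beta4 * beta6)) :
    Q = ((coords _).symm MvPolynomial.X).discInv := by
  let x : V6 (MvPolynomial (Fin 10) ℤ) := (coords _).symm MvPolynomial.X
  have hβ1 : beta1 = x.gram 0 0 * x.lin 0 := by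
    simp [beta1, x, coords, gram, discMatrix, mul_apply, Fin.sum_univ_three]
    ring
  have hβ2 : beta2 = x.gram 0 0 * x.lin 1 + 2 * x.gram 0 1 * x.lin 0 := by
    simp [beta2, x, coords, gram, discMatrix, mul_apply, Fin.sum_univ_three]
    ring
  have hβ3 : beta3 = 2 * x.gram 0 1 * x.lin 1 + x.gram 1 1 * x.lin 0 := by
    simp [beta3, x, coords, gram, discMatrix, mul_apply, Fin.sum_univ_three]
    ring
  have hβ4 : beta4 = x.gram 1 1 * x.lin 1 := by
    simp [beta4, x, coords, gram, discMatrix, mul_apply, Fin.sum_univ_three]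
    ring
  have hβ5 : beta5 = (-x.val) 0 := by
    simp [beta5, x, coords, val, veronese, perp]
    ring
  have hβ6 : beta6 = (-x.val) 1 := by
    simp [beta6, x, coords, val, veronese, perp]
    ring
  refine mul_left_cancel₀ (by norm_num : (16 : MvPolynomial (Fin 10) ℤ) ≠ 0) (hQ.trans ?_)
  have neg_val : perpForm x.gram (-x.val) (-x.val) = perpForm x.gram x.val x.val := by
    simpa using perpForm_smul 1 (-1) (-1) x.gram x.val x.val
  rw [hβ1, hβ2, hβ3, hβ4, hβ5, hβ6, disc4_mul_mul x.isSymm_gram, neg_val,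
    perpForm_lin_mul_perpForm_val, dotProduct_neg, gram, det_mul_discMatrix_mul_transpose]
  change _ = 16 * x.discInv
  simp only [discInv, resInv, linRes]
  ring

theorem Delta6_coords {Q : MvPolynomial (Fin 10) ℤ}
    (hQ : 16 * Q =
      disc4 (beta1 * beta5) (beta1 * beta6 + beta2 * beta5) (beta2 * beta6 + beta3 * beta5)
        (beta3 * beta6 + beta4 * beta5) (beta4 * beta6)) (v : V6 R) :
    Delta6 Q (coords R v) = v.discInv := by
  have := map_discInv_coords_symm (MvPolynomial.aeval (R := ℤ) (coords R v)).toRingHom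
    MvPolynomial.X
  rw [Delta6, eq_discInv_of_sixteen_mul_eq_disc4 hQ]
  refine this.trans ?_
  congr
  rw [Equiv.symm_apply_eq]
  ext i
  simp

end V6

end Discriminant

namespace V6

variable {L : Type*} [Field L] {v : V6 L}

section Torus

/-- The element of the maximal torus given by two diagonal matrices `diag (x, x⁻¹)`,
`diag (y, y⁻¹)` and two scalars. -/
noncomputable def torus (x y s t : Lˣ) : G6 L :=
  (SpecialLinearGroup.diag2 (x : L) x.ne_zero, SpecialLinearGroup.diag2 (y : L) y.ne_zero, s, t)

/-- The weights of the ten coordinates under `z ↦ torus (z ^ x) (z ^ y) (z ^ σ) (z ^ τ)`. -/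
def weight (x y σ τ : ℤ) : Fin 10 → ℤ :=
  ![x + 2 * y - σ, -x + 2 * y - σ, x - 2 * y - σ, -x - 2 * y - σ,
    x + 3 * σ + 2 * τ, -x + 3 * σ + 2 * τ, x - σ, -x - σ, y - τ, -y - τ]

lemma quad_smul_torus (v : V6 L) (x y s t : Lˣ) : (v <• torus x y s t).quad =
    !![s⁻¹ * x * y ^ 2 * v.quad 0 0, s⁻¹ * x * v.quad 0 1, s⁻¹ * x * (y : L)⁻¹ ^ 2 * v.quad 0 2;
      s⁻¹ * (x : L)⁻¹ * y ^ 2 * v.quad 1 0, s⁻¹ * (x : L)⁻¹ * v.quad 1 1,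
      s⁻¹ * (x : L)⁻¹ * (y : L)⁻¹ ^ 2 * v.quad 1 2] := by
  rw [torus, quad_smul, SpecialLinearGroup.diag2_coe', SpecialLinearGroup.diag2_coe']
  ext i j
  fin_cases i <;> fin_cases j <;>
    simp [symSq, mul_apply, Fin.sum_univ_two, Fin.sum_univ_three] <;> ring

lemma lin_smul_torus (v : V6 L) (x y s t : Lˣ) : (v <• torus x y s t).lin =
    ![s ^ 3 * t ^ 2 * x * v.lin 0, s ^ 3 * t ^ 2 * (x : L)⁻¹ * v.lin 1] := by
  rw [torus, lin_smul, SpecialLinearGroup.diag2_coe']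
  ext i
  fin_cases i <;> simp [vecHead, vecTail] <;> ring

lemma mix_smul_torus (v : V6 L) (x y s t : Lˣ) : (v <• torus x y s t).mix =
    ![(t : L)⁻¹ * y * v.mix 0, (t : L)⁻¹ * (y : L)⁻¹ * v.mix 1] := by
  rw [torus, mix_smul, SpecialLinearGroup.diag2_coe']
  ext i
  fin_cases i <;> simp [vecHead, vecTail] <;> ring

lemma coords_smul_torus_zpow (v : V6 L) (x y σ τ : ℤ) (z : Lˣ) (i : Fin 10) :
    coords L (v <• torus (z ^ x) (z ^ y) (z ^ σ) (z ^ τ)) i =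
      ((z ^ weight x y σ τ i : Lˣ) : L) * coords L v i := by
  have zpow_three_mul (a : ℤ) : (z : L) ^ (3 * a) = ((z : L) ^ a) ^ 3 := by
    rw [mul_comm, _root_.zpow_mul, zpow_ofNat]
  have zpow_two_mul (a : ℤ) : (z : L) ^ (2 * a) = ((z : L) ^ a) ^ 2 := by
    rw [mul_comm, _root_.zpow_mul, zpow_ofNat]
  fin_cases i <;>
    simp [coords, quad_smul_torus, lin_smul_torus, mix_smul_torus, weight, zpow_add₀, zpow_sub₀,
      zpow_two_mul, zpow_three_mul, -mul_eq_mul_right_iff] <;>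
    field_simp

end Torus

section Necessity

/-- Stability for the right action of `G6 L`. -/
abbrev IsStable (v : V6 L) : Prop := IsStablePoint (G6 L)ᵐᵒᵖ (coords L) v

lemma not_isStable_of_weight [Infinite L] (x y σ τ : ℤ) (hτ : τ = 1 ∨ τ = -1)
    (hv : ∀ i, weight x y σ τ i < 0 → coords L v i = 0) : ¬ v.IsStable := by
  let ρ (z : Lˣ) : (G6 L)ᵐᵒᵖ := MulOpposite.op (torus (z ^ x) (z ^ y) (z ^ σ) (z ^ τ))
  have hρ : ρ.Injective := fun z z' h => by
    have : z ^ τ = z' ^ τ := congr(($h).unop.2.2.2)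
    rcases hτ with rfl | rfl <;> simpa using this
  exact not_isStablePoint_of_weights (coords L).injective hρ
    (fun z v => coords_smul_torus_zpow v x y σ τ z) hv

namespace IsStable

lemma smul (h : v.IsStable) (g : G6 L) : (v <• g).IsStable :=
  IsStablePoint.smul h (MulOpposite.op g)

section Infinite

variable [Infinite L]

lemma lin_one_ne_zero (h : v.IsStable) (hlin : v.lin 0 = 0) : v.lin 1 ≠ 0 := fun h0 =>
  not_isStable_of_weight 0 0 (-1) (-1) (.inr rfl)
    (by simp [Fin.forall_fin_succ, weight, coords, h0, hlin]) h

lemma mix_one_ne_zero (h : v.IsStable) (hmix : v.mix 0 = 0) : v.mix 1 ≠ 0 := fun h0 =>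
  not_isStable_of_weight 0 0 0 1 (.inl rfl)
    (by simp [Fin.forall_fin_succ, weight, coords, h0, hmix]) h

lemma quad_zero_one_ne_zero (h : v.IsStable) (hlin : v.lin 0 = 0) (hquad : v.quad 0 0 = 0) :
    v.quad 0 1 ≠ 0 := fun h0 =>
  not_isStable_of_weight (-2) (-1) 0 (-1) (.inr rfl)
    (by simp [Fin.forall_fin_succ, weight, coords, h0, hlin, hquad]) h

lemma quad_zero_zero_ne_zero (h : v.IsStable) (hlin : v.lin 0 = 0) (hmix : v.mix 0 = 0) :
    v.quad 0 0 ≠ 0 := fun h0 =>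
  not_isStable_of_weight (-1) (-1) (-1) 1 (.inl rfl)
    (by simp [Fin.forall_fin_succ, weight, coords, h0, hlin, hmix]) h

lemma quad_one_one_ne_zero (h : v.IsStable) (hquad : v.quad 1 0 = 0) (hmix : v.mix 0 = 0) :
    v.quad 1 1 ≠ 0 := fun h0 =>
  not_isStable_of_weight 2 (-1) 0 1 (.inl rfl)
    (by simp [Fin.forall_fin_succ, weight, coords, h0, hquad, hmix]) h

lemma quad_one_one_ne_zero_of_col_zero (h : v.IsStable) (hcol : v.quad.col 0 = 0) :
    v.quad 1 1 ≠ 0 := fun h0 =>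
  have h00 : v.quad 0 0 = 0 := congr_fun hcol 0
  have h10 : v.quad 1 0 = 0 := congr_fun hcol 1
  not_isStable_of_weight 1 (-1) 1 (-1) (.inr rfl)
    (by simp [Fin.forall_fin_succ, weight, coords, h0, h00, h10]) h

lemma quad_col_zero_ne_zero (h : v.IsStable) : v.quad.col 0 ≠ 0 := by
  intro hcol
  obtain ⟨M, hM⟩ := exists_vecMul_apply_eq_zero (v.quad.col 1) 1
  have quad_eq : (v <• ((M, 1, 1, 1) : G6 L)).quad = M.1ᵀ * v.quad := by simp [quad_smul]
  have col_eq (j) : (v <• ((M, 1, 1, 1) : G6 L)).quad.col j = v.quad.col j ᵥ* M.1 := by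
    rw [quad_eq, ← mulVec_transpose]
    rfl
  refine (h.smul (M, 1, 1, 1)).quad_one_one_ne_zero_of_col_zero ?_ ?_
  · rw [col_eq, hcol, zero_vecMul]
  · exact (congr_fun (col_eq 1) 1).trans hM

end Infinite

variable [IsAlgClosed L]

lemma pencilRes_ne_zero (h : v.IsStable) : pencilRes v.quad ≠ 0 := by
  intro h0
  obtain ⟨p, hp, hroot⟩ := exists_mulVec_veronese_eq_zero h0
  obtain ⟨N, hN⟩ := exists_SL2_col_eq hp 0
  have quad_eq : (v <• ((1, N, 1, 1) : G6 L)).quad = v.quad * symSq N.1 := by simp [quad_smul]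
  refine (h.smul (1, N, 1, 1)).quad_col_zero_ne_zero ?_
  rw [quad_eq, ← hroot, ← hN, ← symSq_col_zero]
  rfl

lemma linRes_ne_zero (h : v.IsStable) : v.linRes ≠ 0 := by
  obtain ⟨M, hM⟩ := exists_vecMul_apply_eq_zero v.lin 0
  obtain ⟨N, hN⟩ := exists_vecMul_apply_eq_zero v.mix 0
  have h' := h.smul (M, N, 1, 1)
  have invariant := linRes_smul v M N 1 1
  have hlin : (v <• ((M, N, 1, 1) : G6 L)).lin 0 = 0 := by simpa [lin_smul] using hM
  have hmix : (v <• ((M, N, 1, 1) : G6 L)).mix 0 = 0 := by simpa [mix_smul] using hN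
  generalize v <• ((M, N, 1, 1) : G6 L) = v' at *
  have hval : v'.val 0 ≠ 0 := val_of_mix_zero_eq_zero hmix 0 ▸
    mul_ne_zero (h'.quad_zero_zero_ne_zero hlin hmix) (pow_ne_zero 2 (h'.mix_one_ne_zero hmix))
  have : v'.linRes ≠ 0 := (perp_dotProduct_of_apply_zero_eq_zero hlin v'.val).trans_ne
    (mul_ne_zero (h'.lin_one_ne_zero hlin) hval)
  rw [invariant] at this
  exact right_ne_zero_of_mul this

lemma perpForm_lin_ne_zero (h : v.IsStable) : perpForm v.gram v.lin v.lin ≠ 0 := by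
  obtain ⟨M, hM⟩ := exists_vecMul_apply_eq_zero v.lin 0
  obtain ⟨p, hp, hroot⟩ := exists_dotProduct_veronese_eq_zero ((M.1ᵀ * v.quad) 0)
  obtain ⟨N, hN⟩ := exists_SL2_col_eq hp 0
  have h' := h.smul (M, N, 1, 1)
  have invariant := perpForm_gram_lin_smul v M N 1 1
  have hlin : (v <• ((M, N, 1, 1) : G6 L)).lin 0 = 0 := by simpa [lin_smul] using hM
  have quad_eq : (v <• ((M, N, 1, 1) : G6 L)).quad = M.1ᵀ * v.quad * symSq N.1 := by
    simp [quad_smul]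
  have hquad : (v <• ((M, N, 1, 1) : G6 L)).quad 0 0 = 0 := by
    rw [quad_eq, ← hroot, ← hN, ← symSq_col_zero]
    rfl
  generalize v <• ((M, N, 1, 1) : G6 L) = v' at *
  have hgram : v'.gram 0 0 ≠ 0 := by
    simpa [gram_apply_self, hquad] using h'.quad_zero_one_ne_zero hlin hquad
  have : perpForm v'.gram v'.lin v'.lin ≠ 0 := perpForm_self_of_apply_zero_eq_zero v'.gram hlin ▸
    mul_ne_zero (pow_ne_zero 2 (h'.lin_one_ne_zero hlin)) hgram
  rw [invariant] at this
  exact right_ne_zero_of_mul this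

lemma perpForm_val_ne_zero (h : v.IsStable) : perpForm v.gram v.val v.val ≠ 0 := by
  obtain ⟨M, hM⟩ := exists_vecMul_apply_eq_zero v.val 1
  obtain ⟨N, hN⟩ := exists_vecMul_apply_eq_zero v.mix 0
  have h' := h.smul (M, N, 1, 1)
  have invariant := perpForm_gram_val_smul v M N 1 1
  have hval : (v <• ((M, N, 1, 1) : G6 L)).val 1 = 0 := by simpa [val_smul] using hM
  have hmix : (v <• ((M, N, 1, 1) : G6 L)).mix 0 = 0 := by simpa [mix_smul] using hN
  generalize v <• ((M, N, 1, 1) : G6 L) = v' at *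
  have hquad : v'.quad 1 0 = 0 := by
    simpa [val_of_mix_zero_eq_zero hmix, h'.mix_one_ne_zero hmix] using hval
  have hval0 : v'.val 0 ≠ 0 := fun hval0 =>
    h'.linRes_ne_zero (by simp [linRes, dotProduct, hval, hval0])
  have hgram : v'.gram 1 1 ≠ 0 := by
    simpa [gram_apply_self, hquad] using h'.quad_one_one_ne_zero hquad hmix
  have : perpForm v'.gram v'.val v'.val ≠ 0 := perpForm_self_of_apply_one_eq_zero v'.gram hval ▸
    mul_ne_zero (pow_ne_zero 2 hval0) hgram
  rw [invariant] at this
  exact right_ne_zero_of_mul this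

theorem discInv_ne_zero (h : v.IsStable) : v.discInv ≠ 0 :=
  discInv_ne_zero_iff.mpr ⟨h.pencilRes_ne_zero, h.linRes_ne_zero, h.perpForm_lin_ne_zero,
    h.perpForm_val_ne_zero⟩

end IsStable

end Necessity

open MulAction

section NormalForm

variable {L : Type*} [Field L] {v : V6 L}

/-- The normal form of the vectors `v` with `v.discInv ≠ 0`; its parameters are the values of
`polarInv` and `resInv`. -/
def normalForm (E I : L) : V6 L := ⟨!![1, E, I; 0, 1, 0], ![0, 1], ![0, 1]⟩

lemma eq_normalForm (h00 : v.quad 0 0 = 1) (h10 : v.quad 1 0 = 0) (h11 : v.quad 1 1 = 1)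
    (h12 : v.quad 1 2 = 0) (hlin : v.lin = ![0, 1]) (hmix : v.mix = ![0, 1]) :
    v = normalForm v.polarInv v.resInv := by
  have hval : v.val = ![1, 0] := by
    ext i
    fin_cases i <;> simp [val_of_mix_zero_eq_zero, hmix, h00, h10]
  have polarInv_eq : v.polarInv = v.quad 0 1 := by
    simp [polarInv, perpForm, hlin, hval, perp, gram, discMatrix, mul_apply, Fin.sum_univ_three,
      h10, h11, h12]
  have resInv_eq : v.resInv = v.quad 0 2 := by
    simp [resInv, linRes, pencilRes, crossProduct, hlin, hval, perp, h00, h10, h11, h12]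
  rw [polarInv_eq, resInv_eq]
  ext1
  · ext i j
    fin_cases i <;> fin_cases j <;> simp [normalForm, h00, h10, h11, h12]
  · exact hlin
  · exact hmix

lemma normalForm_mem_orbit_of_smul (g : G6 L)
    (h : normalForm (v <• g).polarInv (v <• g).resInv ∈ orbit (G6 L)ᵐᵒᵖ (v <• g)) :
    normalForm v.polarInv v.resInv ∈ orbit (G6 L)ᵐᵒᵖ v := by
  rwa [polarInv_smul, resInv_smul, orbit_smul] at h

lemma exists_units_monomials_eq_one [IsAlgClosed L] (a k h r : Lˣ) : ∃ x y s t : Lˣ,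
    (s : L)⁻¹ * x * y ^ 2 * a = 1 ∧ (s : L)⁻¹ * (x : L)⁻¹ * k = 1 ∧
      (s : L) ^ 3 * t ^ 2 * (x : L)⁻¹ * h = 1 ∧ (t : L)⁻¹ * (y : L)⁻¹ * r = 1 := by
  have exists_sq_eq (u : Lˣ) : ∃ x : Lˣ, x ^ 2 = u := by
    obtain ⟨x, hx⟩ := IsAlgClosed.exists_pow_nat_eq (u : L) two_pos
    have hx0 : x ≠ 0 := fun h0 => u.ne_zero (by rw [← hx, h0, zero_pow two_ne_zero])
    exact ⟨Units.mk0 x hx0, Units.ext hx⟩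
  obtain ⟨x, hx⟩ := exists_sq_eq (h * a * k ^ 2 * r ^ 2)
  obtain ⟨y, hy⟩ := exists_sq_eq (k / (x ^ 2 * a))
  have hx' : (x : L) ^ 2 = h * a * k ^ 2 * r ^ 2 := congr(($hx : Lˣ))
  have hy' : (y : L) ^ 2 * (x ^ 2 * a) = k := congr(($(eq_div_iff_mul_eq'.mp hy) : Lˣ))
  refine ⟨x, y, k / x, r / y, ?_, ?_, ?_, ?_⟩ <;>
    simp only [Units.val_div_eq_div_val] <;> field_simp
  · linear_combination hy'
  · linear_combination -(x : L) ^ 2 * y ^ 2 * hx' - (h : L) * k ^ 2 * r ^ 2 * hy'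

lemma normalForm_mem_orbit_of_monomial [IsAlgClosed L] (hI : v.resInv ≠ 0) (hlin : v.lin 0 = 0)
    (hmix : v.mix 0 = 0) (h10 : v.quad 1 0 = 0) (h12 : v.quad 1 2 = 0) :
    normalForm v.polarInv v.resInv ∈ orbit (G6 L)ᵐᵒᵖ v := by
  have resInv_eq : v.resInv = (v.quad 0 2 * v.quad 1 1) * (v.quad 0 0 * v.quad 1 1) *
      (v.lin 1 * (v.quad 0 0 * v.mix 1 ^ 2)) ^ 2 := by
    rw [resInv, linRes, perp_dotProduct_of_apply_zero_eq_zero hlin, val_of_mix_zero_eq_zero hmix]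
    simp [pencilRes, crossProduct, h10, h12]
  obtain ⟨⟨⟨-, -⟩, h00, h11⟩, hlin1, -, hmix1⟩ :
      ((v.quad 0 2 ≠ 0 ∧ v.quad 1 1 ≠ 0) ∧ v.quad 0 0 ≠ 0 ∧ v.quad 1 1 ≠ 0) ∧
        v.lin 1 ≠ 0 ∧ v.quad 0 0 ≠ 0 ∧ v.mix 1 ≠ 0 := by
    simpa [resInv_eq, not_or] using hI
  obtain ⟨x, y, s, t, e00, e11, elin, emix⟩ := exists_units_monomials_eq_one (Units.mk0 _ h00)
    (Units.mk0 _ h11) (Units.mk0 _ hlin1) (Units.mk0 _ hmix1)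
  rw [Units.val_mk0] at e00 e11 elin emix
  refine normalForm_mem_orbit_of_smul (torus x y s t) ?_
  rw [← eq_normalForm]
  · exact mem_orbit_self _
  · simpa [quad_smul_torus] using e00
  · simp [quad_smul_torus, h10]
  · simpa [quad_smul_torus] using e11
  · simp [quad_smul_torus, h12]
  · simp [lin_smul_torus, hlin, elin]
  · simp [mix_smul_torus, hmix, emix]

lemma normalForm_mem_orbit_of_triangular [IsAlgClosed L] (hI : v.resInv ≠ 0) (h11 : v.quad 1 1 ≠ 0)
    (hlin : v.lin 0 = 0) (hmix : v.mix 0 = 0) (h10 : v.quad 1 0 = 0) :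
    normalForm v.polarInv v.resInv ∈ orbit (G6 L)ᵐᵒᵖ v := by
  obtain ⟨N, hN⟩ : ∃ N : SL(2, L), N.1 = !![1, -v.quad 1 2 / v.quad 1 1; 0, 1] :=
    ⟨⟨_, by simp [det_fin_two]⟩, rfl⟩
  refine normalForm_mem_orbit_of_smul (1, N, 1, 1) ?_
  have quad_eq : (v <• ((1, N, 1, 1) : G6 L)).quad = v.quad * symSq N.1 := by simp [quad_smul]
  apply normalForm_mem_orbit_of_monomial
  · rwa [resInv_smul]
  · simpa [lin_smul] using hlin
  · simp [mix_smul, hN, vecHead, hmix]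
  · simp [quad_eq, mul_apply, Fin.sum_univ_three, symSq, hN, h10]
  · simp [quad_eq, mul_apply, Fin.sum_univ_three, symSq, hN, h10]
    field_simp
    ring

theorem normalForm_mem_orbit [IsAlgClosed L] (hv : v.discInv ≠ 0) :
    normalForm v.polarInv v.resInv ∈ orbit (G6 L)ᵐᵒᵖ v := by
  obtain ⟨M, hMlin, hMval⟩ :=
    exists_vecMul_eq_zero_of_perp_dotProduct_ne_zero (discInv_ne_zero_iff.mp hv).2.1
  obtain ⟨N, hN⟩ := exists_vecMul_apply_eq_zero v.mix 0
  refine normalForm_mem_orbit_of_smul (M, N, 1, 1) ?_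
  have hlin : (v <• ((M, N, 1, 1) : G6 L)).lin 0 = 0 := by simpa [lin_smul] using hMlin
  have hval : (v <• ((M, N, 1, 1) : G6 L)).val 1 = 0 := by simpa [val_smul] using hMval
  have hmix : (v <• ((M, N, 1, 1) : G6 L)).mix 0 = 0 := by simpa [mix_smul] using hN
  rw [← discInv_smul v (M, N, 1, 1)] at hv
  generalize v <• ((M, N, 1, 1) : G6 L) = v' at *
  have hI : v'.resInv ≠ 0 := left_ne_zero_of_mul hv
  obtain ⟨-, hlinRes, -, hdisc⟩ := discInv_ne_zero_iff.mp hv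
  have hmix1 : v'.mix 1 ≠ 0 := by
    rintro h0
    exact hlinRes (by simp [linRes, dotProduct, val_of_mix_zero_eq_zero hmix, h0])
  have h10 : v'.quad 1 0 = 0 := by
    simpa [val_of_mix_zero_eq_zero hmix, hmix1] using hval
  have h11 : v'.quad 1 1 ≠ 0 := by
    rintro h0
    exact hdisc (by simp [perpForm_self_of_apply_one_eq_zero _ hval, gram_apply_self, h10, h0])
  exact normalForm_mem_orbit_of_triangular hI h11 hlin hmix h10

lemma eq_torus_of_normalForm_smul_eq {E I : L} {M N : SL(2, L)} {s t : Lˣ}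
    (h : normalForm E I <• ((M, N, s, t) : G6 L) = normalForm E I) :
    (M, N, s, t) = torus s⁻¹ t⁻¹ s t := by
  have lin_eq := congrArg V6.lin h
  have mix_eq := congrArg V6.mix h
  have quad_eq (i j) := congr_fun₂ (congrArg V6.quad h) i j
  simp only [quad_smul, normalForm, symSq, Matrix.smul_apply, mul_apply, Fin.sum_univ_two,
    Fin.sum_univ_three, transpose_apply, of_apply, cons_val, smul_eq_mul] at quad_eq
  have hM10 : M.1 1 0 = 0 := by
    simpa [lin_smul, normalForm, vecMul, dotProduct] using congr_fun lin_eq 0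
  have hN10 : N.1 1 0 = 0 := by
    simpa [mix_smul, normalForm, vecMul, dotProduct] using congr_fun mix_eq 0
  have hN11 : N.1 1 1 = t := by
    have : (t : L)⁻¹ * N.1 1 1 = 1 := by
      simpa [mix_smul, normalForm, vecMul, dotProduct] using congr_fun mix_eq 1
    rwa [inv_mul_eq_one₀ t.ne_zero, eq_comm] at this
  have hM : M.1 0 0 * M.1 1 1 = 1 := by
    have := M.2
    rwa [det_fin_two, hM10, mul_zero, sub_zero] at this
  have hN : N.1 0 0 * t = 1 := by
    have := N.2
    rwa [det_fin_two, hN10, mul_zero, sub_zero, hN11] at this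
  have hM01 : M.1 0 1 = 0 := by
    simpa [hN10, left_ne_zero_of_mul_eq_one hN] using quad_eq 1 0
  have hN01 : N.1 0 1 = 0 := by
    simpa [hN11, hM01, right_ne_zero_of_mul_eq_one hM] using quad_eq 1 2
  have hM11 : M.1 1 1 = s := by
    have : (s : L)⁻¹ * M.1 1 1 = 1 := by simpa [hN01, hN11, hM01, hN] using quad_eq 1 1
    rwa [inv_mul_eq_one₀ s.ne_zero, eq_comm] at this
  rw [torus, ← SL2_eq_diag2 hM01 hM10 hM11, ← SL2_eq_diag2 hN01 hN10 hN11]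

lemma sq_eq_one_of_normalForm_smul_torus_eq {E I : L} {s t : Lˣ}
    (h : normalForm E I <• torus s⁻¹ t⁻¹ s t = normalForm E I) : s ^ 2 = 1 ∧ t ^ 2 = 1 := by
  have quad_eq : (s : L)⁻¹ * (s : L)⁻¹ * (t : L)⁻¹ ^ 2 = 1 := by
    simpa [quad_smul_torus, normalForm] using congr_fun₂ (congrArg V6.quad h) 0 0
  have lin_eq : (s : L) ^ 3 * t ^ 2 * s = 1 := by
    simpa [lin_smul_torus, normalForm] using congr_fun (congrArg V6.lin h) 1
  field_simp at quad_eq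
  have hs : (s : L) ^ 2 = 1 := by linear_combination lin_eq + (s : L) ^ 2 * quad_eq
  have ht : (t : L) ^ 2 = 1 := by linear_combination -quad_eq - (t : L) ^ 2 * hs
  exact ⟨Units.ext hs, Units.ext ht⟩

lemma finite_stabilizer_normalForm (E I : L) : Finite (stabilizer (G6 L)ᵐᵒᵖ (normalForm E I)) := by
  let signs (z : rootsOfUnity 2 L × rootsOfUnity 2 L) : (G6 L)ᵐᵒᵖ :=
    MulOpposite.op (torus z.1.1⁻¹ z.2.1⁻¹ z.1 z.2)
  refine Set.Finite.subset (Set.finite_range signs) ?_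
  rintro ⟨M, N, s, t⟩ (h : normalForm E I <• ((M, N, s, t) : G6 L) = normalForm E I)
  have eq_torus := eq_torus_of_normalForm_smul_eq h
  rw [eq_torus] at h
  obtain ⟨hs, ht⟩ := sq_eq_one_of_normalForm_smul_torus_eq h
  exact ⟨(⟨s, hs⟩, ⟨t, ht⟩), congrArg MulOpposite.op eq_torus.symm⟩

end NormalForm

section Sufficiency

variable {L : Type*} [Field L] [IsAlgClosed L] {v : V6 L}

lemma mem_orbit_iff (hv : v.discInv ≠ 0) {w : V6 L} :
    w ∈ orbit (G6 L)ᵐᵒᵖ v ↔ w.resInv = v.resInv ∧ w.polarInv = v.polarInv := by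
  constructor
  · rintro ⟨g, rfl⟩
    exact ⟨resInv_smul v g.unop, polarInv_smul v g.unop⟩
  · rintro ⟨hI, hE⟩
    have hw : w.discInv ≠ 0 := by rwa [discInv, hI, hE]
    have := normalForm_mem_orbit hw
    rw [hI, hE, ← orbit_eq_iff, orbit_eq_iff.mpr (normalForm_mem_orbit hv)] at this
    exact orbit_eq_iff.mp this.symm

lemma isZariskiClosed_orbit (hv : v.discInv ≠ 0) :
    IsZariskiClosed (coords L '' orbit (G6 L)ᵐᵒᵖ v) := by
  let x : V6 (MvPolynomial (Fin 10) L) := (coords _).symm MvPolynomial.X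
  refine ⟨{x.resInv - MvPolynomial.C v.resInv, x.polarInv - MvPolynomial.C v.polarInv}, ?_⟩
  ext c
  have eval_X : MvPolynomial.eval c ∘ MvPolynomial.X = c := funext fun i => MvPolynomial.eval_X i
  simp [x, Equiv.image_eq_preimage_symm, mem_orbit_iff hv, map_resInv_coords_symm,
    map_polarInv_coords_symm, eval_X, sub_eq_zero]

theorem isStable_of_discInv_ne_zero (hv : v.discInv ≠ 0) : v.IsStable := by
  have normalForm_orbit := orbit_eq_iff.mpr (normalForm_mem_orbit hv)
  have := finite_stabilizer_normalForm v.polarInv v.resInv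
  exact ⟨isZariskiClosed_orbit hv,
    finite_stabilizer_of_mem_orbit (normalForm_orbit ▸ mem_orbit_self v)⟩

end Sufficiency

end V6

/-
STATEMENT 14 (Theorem 5.6): a vector v ∈ V₆ is stable for the action of
G₆ = SL₂(L) × SL₂(L) × Lˣ × Lˣ if and only if Δ₆(v) ≠ 0.
-/
theorem stable6_iff_Delta6_ne_zero
    {L : Type*} [Field L] [IsAlgClosed L]
    (Q : MvPolynomial (Fin 10) ℤ)
    (hQ : 16 * Q =
      disc4 (beta1 * beta5) (beta1 * beta6 + beta2 * beta5) (beta2 * beta6 + beta3 * beta5)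
        (beta3 * beta6 + beta4 * beta5) (beta4 * beta6))
    (c : Fin 10 → L) :
    Stable6 c ↔ Delta6 Q c ≠ 0 := by
  obtain ⟨v, rfl⟩ := (V6.coords L).surjective c
  rw [stable6_coords_iff, V6.Delta6_coords hQ]
  exact ⟨V6.IsStable.discInv_ne_zero, V6.isStable_of_discInv_ne_zero⟩
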